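/- arXiv:2603.13796 — 6 statements merged into one kernel-verified Lean document; each statement's English description precedes it below -/
import Mathlib

section
/- Information monotonicity (data processing) of f-mutual information: let f : ℝ → ℝ be convex on the set [0,∞) of nonnegative reals, let p be a joint pmf on α × β with marginals pX, pY, and let T : γ × α → ℝ be a stochastic channel, i.e. T(z,x) ≥ 0 for all z,x and Σ_z T(z,x) = 1 for every x. Define the processed joint pmf q on γ × β by q(z,y) = Σ_x T(z,x)·p(x,y). Assume pX(x) > 0 for all x, pY(y) > 0 for all y, and qZ(z) := Σ_x T(z,x)·pX(x) > 0 for all z. Then MI^f(q) ≤ MI^f(p). -/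
/-- Information monotonicity (data processing) of f-mutual information. -/
theorem fMI_data_processing {α β γ : Type*} [Fintype α] [Fintype β] [Fintype γ]
    (f : ℝ → ℝ) (hf : ConvexOn ℝ (Set.Ici (0 : ℝ)) f)
    (p : α × β → ℝ)
    (hp_nonneg : ∀ x y, 0 ≤ p (x, y))
    (hp_sum : ∑ x, ∑ y, p (x, y) = 1)
    (T : γ × α → ℝ)
    (hT_nonneg : ∀ z x, 0 ≤ T (z, x))
    (hT_sum : ∀ x, ∑ z, T (z, x) = 1)
    (q : γ × β → ℝ)
    (hq : ∀ z y, q (z, y) = ∑ x, T (z, x) * p (x, y))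
    (hpX_pos : ∀ x, 0 < ∑ y, p (x, y))
    (hpY_pos : ∀ y, 0 < ∑ x, p (x, y))
    (hqZ_pos : ∀ z, 0 < ∑ x, T (z, x) * (∑ y, p (x, y))) :
    (∑ z, ∑ y, (∑ y', q (z, y')) * (∑ z', q (z', y)) *
        f (q (z, y) / ((∑ y', q (z, y')) * (∑ z', q (z', y))))) ≤
    (∑ x, ∑ y, (∑ y', p (x, y')) * (∑ x', p (x', y)) *
        f (p (x, y) / ((∑ y', p (x, y')) * (∑ x', p (x', y))))) := by
  have hZ : ∀ z, ∑ y', q (z, y') = ∑ x, T (z, x) * (∑ y, p (x, y)) := by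
    intro z
    simp_rw [hq, Finset.mul_sum]
    exact Finset.sum_comm
  have hY : ∀ y, ∑ z', q (z', y) = ∑ x, p (x, y) := by
    intro y
    simp_rw [hq]
    rw [Finset.sum_comm]
    refine Finset.sum_congr rfl fun x _ => ?_
    rw [← Finset.sum_mul, hT_sum, one_mul]
  simp_rw [hZ, hY]
  generalize hPX : (fun x => ∑ y, p (x, y)) = a
  generalize hPY : (fun y => ∑ x, p (x, y)) = b
  have ha : ∀ x, ∑ y, p (x, y) = a x := fun x => congrFun hPX x
  have hb : ∀ y, ∑ x, p (x, y) = b y := fun y => congrFun hPY y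
  simp_rw [ha] at hpX_pos hqZ_pos ⊢
  simp_rw [hb] at hpY_pos ⊢
  have key : ∀ z y, (∑ x, T (z, x) * a x) * f (q (z, y) / ((∑ x, T (z, x) * a x) * b y)) ≤
      ∑ x, T (z, x) * a x * f (p (x, y) / (a x * b y)) := by
    intro z y
    have h := hf.map_centerMass_le (t := Finset.univ) (w := fun x => T (z, x) * a x)
      (p := fun x => p (x, y) / (a x * b y))
      (fun x _ => mul_nonneg (hT_nonneg z x) (hpX_pos x).le) (hqZ_pos z)
      (fun x _ => div_nonneg (hp_nonneg x y) (mul_pos (hpX_pos x) (hpY_pos y)).le)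
    simp only [Finset.centerMass, smul_eq_mul, Function.comp] at h
    have e : (∑ x, T (z, x) * a x)⁻¹ * ∑ x, T (z, x) * a x * (p (x, y) / (a x * b y)) =
        q (z, y) / ((∑ x, T (z, x) * a x) * b y) := by
      have e2 : ∑ x, T (z, x) * a x * (p (x, y) / (a x * b y)) = q (z, y) / b y := by
        rw [hq, Finset.sum_div]
        refine Finset.sum_congr rfl fun x _ => ?_
        have h1 := (hpX_pos x).ne'
        have h2 := (hpY_pos y).ne'
        field_simp
      rw [e2]
      have h1 := (hqZ_pos z).ne'
      have h2 := (hpY_pos y).ne'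
      field_simp
    rw [e] at h
    exact (le_inv_mul_iff₀ (hqZ_pos z)).1 h
  calc _ ≤ ∑ z, ∑ y, b y * ∑ x, T (z, x) * a x * f (p (x, y) / (a x * b y)) := by
        refine Finset.sum_le_sum fun z _ => Finset.sum_le_sum fun y _ => ?_
        have := mul_le_mul_of_nonneg_left (key z y) (hpY_pos y).le
        linarith
    _ = ∑ y, ∑ x, ∑ z, T (z, x) * (a x * b y * f (p (x, y) / (a x * b y))) := by
        rw [Finset.sum_comm]
        refine Finset.sum_congr rfl fun y _ => ?_
        rw [Finset.sum_comm]
        refine Finset.sum_congr rfl fun z _ => ?_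
        rw [Finset.mul_sum]
        exact Finset.sum_congr rfl fun x _ => by ring
    _ = _ := by
        rw [Finset.sum_comm]
        refine Finset.sum_congr rfl fun x _ => Finset.sum_congr rfl fun y _ => ?_
        rw [← Finset.sum_mul, hT_sum, one_mul]
end

section
/- Uniqueness of the KL dual optimizer: let p, q be pmfs on a finite type Ω with p(σ) > 0 and q(σ) > 0 for all σ, and let D : Ω → ℝ satisfy D(σ) > 0 for all σ. If Σ_σ p(σ)·(log D(σ) + 1) − Σ_σ q(σ)·D(σ) = KL(p‖q), then D(σ) = p(σ)/q(σ) for every σ ∈ Ω. -/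
/-- Uniqueness of the KL dual optimizer. -/
theorem kl_dual_optimizer_unique {Ω : Type*} [Fintype Ω]
    (p q : Ω → ℝ)
    (hp_pos : ∀ σ, 0 < p σ) (hp_sum : ∑ σ, p σ = 1)
    (hq_pos : ∀ σ, 0 < q σ) (hq_sum : ∑ σ, q σ = 1)
    (D : Ω → ℝ) (hD_pos : ∀ σ, 0 < D σ)
    (heq : (∑ σ, p σ * (Real.log (D σ) + 1)) - (∑ σ, q σ * D σ) =
      ∑ σ, p σ * Real.log (p σ / q σ)) :
    ∀ σ, D σ = p σ / q σ := by
  have hlog : ∀ σ, Real.log (q σ * D σ / p σ) =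
      Real.log (D σ) - Real.log (p σ / q σ) := by
    intro σ
    have h1 := (hp_pos σ).ne'
    have h2 := (hq_pos σ).ne'
    have h3 := (hD_pos σ).ne'
    rw [Real.log_div (mul_ne_zero h2 h3) h1, Real.log_mul h2 h3, Real.log_div h1 h2]
    ring
  have hx : ∀ σ, 0 < q σ * D σ / p σ := fun σ =>
    div_pos (mul_pos (hq_pos σ) (hD_pos σ)) (hp_pos σ)
  have hterm : ∀ σ, p σ * (q σ * D σ / p σ - 1 - Real.log (q σ * D σ / p σ)) =
      q σ * D σ - p σ * (Real.log (D σ) + 1) + p σ * Real.log (p σ / q σ) := by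
    intro σ
    have h4 : p σ * (q σ * D σ / p σ) = q σ * D σ := by
      have := (hp_pos σ).ne'
      field_simp
    rw [hlog]
    linear_combination h4
  have hnn : ∀ σ ∈ Finset.univ,
      0 ≤ p σ * (q σ * D σ / p σ - 1 - Real.log (q σ * D σ / p σ)) := by
    intro σ _
    have := Real.log_le_sub_one_of_pos (hx σ)
    exact mul_nonneg (hp_pos σ).le (by linarith)
  have hsum : ∑ σ, p σ * (q σ * D σ / p σ - 1 - Real.log (q σ * D σ / p σ)) = 0 := by
    simp only [hterm]
    rw [Finset.sum_add_distrib, Finset.sum_sub_distrib]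
    linarith
  intro σ
  have h0 := (Finset.sum_eq_zero_iff_of_nonneg hnn).1 hsum σ (Finset.mem_univ σ)
  have h1 := (mul_eq_zero.1 h0).resolve_left (hp_pos σ).ne'
  have hone : q σ * D σ / p σ = 1 := by
    by_contra hne
    have := Real.log_lt_sub_one_of_pos (hx σ) hne
    linarith
  rw [div_eq_one_iff_eq (hp_pos σ).ne'] at hone
  rw [eq_div_iff (hq_pos σ).ne']
  linarith
end

section
/- Dual lower bound for mutual information: let p be a joint pmf on α × β with marginals pX, pY, and let D : α × β → ℝ satisfy D(x,y) > 0 for all x,y. Then Σ_{x,y} p(x,y)·(log D(x,y) + 1) − Σ_{x,y} pX(x)·pY(y)·D(x,y) ≤ MI(p). -/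
/-- Dual lower bound for mutual information. -/
theorem mi_dual_lower_bound {α β : Type*} [Fintype α] [Fintype β]
    (p : α × β → ℝ)
    (hp_nonneg : ∀ x y, 0 ≤ p (x, y))
    (hp_sum : ∑ x, ∑ y, p (x, y) = 1)
    (D : α × β → ℝ) (hD_pos : ∀ x y, 0 < D (x, y)) :
    (∑ x, ∑ y, p (x, y) * (Real.log (D (x, y)) + 1)) -
      (∑ x, ∑ y, (∑ y', p (x, y')) * (∑ x', p (x', y)) * D (x, y)) ≤
    ∑ x, ∑ y, p (x, y) * Real.log (p (x, y) / ((∑ y', p (x, y')) * (∑ x', p (x', y)))) := by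
  rw [← Finset.sum_sub_distrib]
  refine Finset.sum_le_sum fun x _ => ?_
  rw [← Finset.sum_sub_distrib]
  refine Finset.sum_le_sum fun y _ => ?_
  have hX : p (x, y) ≤ ∑ y', p (x, y') :=
    Finset.single_le_sum (f := fun y' => p (x, y')) (fun y' _ => hp_nonneg x y')
      (Finset.mem_univ y)
  have hY : p (x, y) ≤ ∑ x', p (x', y) :=
    Finset.single_le_sum (f := fun x' => p (x', y)) (fun x' _ => hp_nonneg x' y)
      (Finset.mem_univ x)
  have hD := hD_pos x y
  generalize (∑ y', p (x, y')) = a at *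
  generalize (∑ x', p (x', y)) = b at *
  generalize D (x, y) = d at *
  have h0 := hp_nonneg x y
  generalize p (x, y) = q at *
  rcases h0.eq_or_lt with h | h
  · subst h
    have : 0 ≤ a * b * d := by positivity
    simpa using this
  · have ha : 0 < a := h.trans_le hX
    have hb : 0 < b := h.trans_le hY
    have key := Real.log_le_sub_one_of_pos (show 0 < a * b * d / q by positivity)
    rw [Real.log_div (by positivity) h.ne', Real.log_mul (by positivity) hD.ne'] at key
    rw [Real.log_div h.ne' (by positivity)]
    have h2 := mul_le_mul_of_nonneg_left key h.le
    have h3 : q * (a * b * d / q - 1) = a * b * d - q := by field_simp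
    rw [h3] at h2
    linarith
end

section
/- Variational characterization of PMI: let p be a joint pmf on α × β with p(x,y) > 0 for all x,y, and marginals pX, pY. For any score function s : α × β → ℝ, define J(s) = Σ_{x,y} p(x,y)·(s(x,y) + 1) − Σ_{x,y} pX(x)·pY(y)·exp(s(x,y)). Then J(s) ≤ MI(p), and J(s) = MI(p) if and only if s(x,y) = PMI_p(x;y) for every x ∈ α and y ∈ β. -/
lemma pmi_key (a q s : ℝ) (ha : 0 < a) (hq : 0 < q) :
    a * (s + 1) - q * Real.exp s ≤ a * Real.log (a / q) ∧
    (a * (s + 1) - q * Real.exp s = a * Real.log (a / q) ↔ s = Real.log (a / q)) := by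
  have h0 : 0 < a / q := div_pos ha hq
  obtain ⟨t, ht⟩ : ∃ t, s = t + Real.log (a / q) := ⟨s - Real.log (a / q), by ring⟩
  have h1 : q * Real.exp s = a * Real.exp t := by
    rw [ht, Real.exp_add, Real.exp_log h0]
    field_simp
  have h2 := Real.add_one_le_exp t
  refine ⟨?_, ?_, ?_⟩
  · rw [h1, ht]
    nlinarith
  · intro h
    by_contra hne
    have htne : t ≠ 0 := by
      rintro rfl
      exact hne (by simpa using ht)
    have h3 := Real.add_one_lt_exp htne
    rw [h1, ht] at h
    nlinarith
  · intro h
    have h4 : t = 0 := by linarith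
    rw [h1, ht, h4, Real.exp_zero]
    ring

/-- Variational characterization of pointwise mutual information. -/
theorem pmi_variational {α β : Type*} [Fintype α] [Fintype β]
    (p : α × β → ℝ)
    (hp_pos : ∀ x y, 0 < p (x, y))
    (hp_sum : ∑ x, ∑ y, p (x, y) = 1)
    (s : α × β → ℝ) :
    ((∑ x, ∑ y, p (x, y) * (s (x, y) + 1)) -
        (∑ x, ∑ y, (∑ y', p (x, y')) * (∑ x', p (x', y)) * Real.exp (s (x, y))) ≤
      ∑ x, ∑ y, p (x, y) * Real.log (p (x, y) / ((∑ y', p (x, y')) * (∑ x', p (x', y))))) ∧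
    ((∑ x, ∑ y, p (x, y) * (s (x, y) + 1)) -
        (∑ x, ∑ y, (∑ y', p (x, y')) * (∑ x', p (x', y)) * Real.exp (s (x, y))) =
      (∑ x, ∑ y, p (x, y) * Real.log (p (x, y) / ((∑ y', p (x, y')) * (∑ x', p (x', y))))) ↔
      ∀ x y, s (x, y) = Real.log (p (x, y) / ((∑ y', p (x, y')) * (∑ x', p (x', y))))) := by
  have hX : ∀ (x : α) (_ : β), 0 < ∑ y', p (x, y') := fun x y =>
    Finset.sum_pos (fun y' _ => hp_pos x y') ⟨y, Finset.mem_univ y⟩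
  have hY : ∀ (_ : α) (y : β), 0 < ∑ x', p (x', y) := fun x y =>
    Finset.sum_pos (fun x' _ => hp_pos x' y) ⟨x, Finset.mem_univ x⟩
  have key := fun x y => pmi_key (p (x, y)) ((∑ y', p (x, y')) * (∑ x', p (x', y))) (s (x, y))
    (hp_pos x y) (mul_pos (hX x y) (hY x y))
  simp only [← Finset.sum_sub_distrib]
  have hin : ∀ x ∈ Finset.univ, _ := fun x (_ : x ∈ (Finset.univ : Finset α)) =>
    Finset.sum_le_sum (fun y (_ : y ∈ (Finset.univ : Finset β)) => (key x y).1)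
  refine ⟨Finset.sum_le_sum hin, ?_⟩
  rw [Finset.sum_eq_sum_iff_of_le hin]
  refine forall_congr' fun x => ?_
  rw [Finset.sum_eq_sum_iff_of_le (fun y _ => (key x y).1)]
  simp only [Finset.mem_univ, true_imp_iff]
  exact forall_congr' fun y => (key x y).2
end

section
/- Dual inequality for f-divergence (variational lower bound): let p, q be pmfs on a finite type Ω with q(σ) > 0 for all σ, let f : ℝ → ℝ be convex, and let u : Ω → ℝ be any function such that for each σ the set { t·u(σ) − f(t) : t ∈ ℝ } is bounded above. Define the convex conjugate f*(x) = sup_{t ∈ ℝ} ( t·x − f(t) ). Then Σ_σ u(σ)·p(σ) − Σ_σ f*(u(σ))·q(σ) ≤ d_f(p;q). -/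
/-- Dual inequality (variational lower bound) for f-divergence. -/
theorem fdiv_dual_lower_bound {Ω : Type*} [Fintype Ω]
    (p q : Ω → ℝ)
    (hp_nonneg : ∀ σ, 0 ≤ p σ) (hp_sum : ∑ σ, p σ = 1)
    (hq_pos : ∀ σ, 0 < q σ) (hq_sum : ∑ σ, q σ = 1)
    (f : ℝ → ℝ) (hf : ConvexOn ℝ Set.univ f)
    (u : Ω → ℝ)
    (hbdd : ∀ σ, BddAbove (Set.range fun t : ℝ => t * u σ - f t)) :
    (∑ σ, u σ * p σ) - (∑ σ, (sSup (Set.range fun t : ℝ => t * u σ - f t)) * q σ) ≤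
      ∑ σ, q σ * f (p σ / q σ) := by
  rw [← Finset.sum_sub_distrib]
  refine Finset.sum_le_sum fun σ _ => ?_
  have hq := hq_pos σ
  have h : p σ / q σ * u σ - f (p σ / q σ) ≤
      sSup (Set.range fun t : ℝ => t * u σ - f t) :=
    le_csSup (hbdd σ) ⟨p σ / q σ, rfl⟩
  have h2 := mul_le_mul_of_nonneg_right h hq.le
  have h3 : p σ / q σ * q σ = p σ := div_mul_cancel₀ _ hq.ne'
  have h4 : (p σ / q σ * u σ - f (p σ / q σ)) * q σ
      = u σ * p σ - q σ * f (p σ / q σ) := by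
    calc _ = u σ * (p σ / q σ * q σ) - q σ * f (p σ / q σ) := by ring
      _ = _ := by rw [h3]
  linarith
end

section
/- Equality in the f-divergence dual at the subgradient: let p, q be pmfs on a finite type Ω with q(σ) > 0 for all σ, let f : ℝ → ℝ be convex, and let u : Ω → ℝ be such that for every σ, u(σ) is a subgradient of f at r(σ) := p(σ)/q(σ), i.e. f(t) ≥ f(r(σ)) + u(σ)·(t − r(σ)) for all t ∈ ℝ. Then for every σ the set { t·u(σ) − f(t) : t ∈ ℝ } is bounded above with supremum f*(u(σ)) = u(σ)·r(σ) − f(r(σ)), and d_f(p;q) = Σ_σ u(σ)·p(σ) − Σ_σ f*(u(σ))·q(σ). -/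
/-- Equality in the f-divergence dual bound at the subgradient. -/
theorem fdiv_dual_eq_at_subgradient {Ω : Type*} [Fintype Ω]
    (p q : Ω → ℝ)
    (hp_nonneg : ∀ σ, 0 ≤ p σ) (hp_sum : ∑ σ, p σ = 1)
    (hq_pos : ∀ σ, 0 < q σ) (hq_sum : ∑ σ, q σ = 1)
    (f : ℝ → ℝ) (hf : ConvexOn ℝ Set.univ f)
    (u : Ω → ℝ)
    (hsubgrad : ∀ σ, ∀ t : ℝ, f (p σ / q σ) + u σ * (t - p σ / q σ) ≤ f t) :
    (∀ σ, IsLUB (Set.range fun t : ℝ => t * u σ - f t)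
        (u σ * (p σ / q σ) - f (p σ / q σ))) ∧
    (∑ σ, q σ * f (p σ / q σ)) =
      (∑ σ, u σ * p σ) -
        (∑ σ, (u σ * (p σ / q σ) - f (p σ / q σ)) * q σ) := by
  refine ⟨fun σ => IsGreatest.isLUB ⟨⟨p σ / q σ, by ring⟩, ?_⟩, ?_⟩
  · rintro _ ⟨t, rfl⟩
    have h := hsubgrad σ t
    show t * u σ - f t ≤ _
    linarith
  · rw [← Finset.sum_sub_distrib]
    refine Finset.sum_congr rfl fun σ _ => ?_
    have h : p σ / q σ * q σ = p σ := div_mul_cancel₀ _ (hq_pos σ).ne'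
    rw [sub_mul, mul_assoc (u σ), h]
    ring
end
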